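/- Let I be a monomial ideal in S = K[x₁,…,xₙ], and let i₁, i₂ ≥ 1 and 0 ≤ k ≤ min{i₁, i₂} be integers. For any monomial m with β_{i₁+i₂−k, m}(S/I) ≠ 0 there exist monomials n₁, n₂ dividing m such that m = lcm(n₁, n₂), β_{i₁, n₁}(S/I) ≠ 0 and β_{i₂, n₂}(S/I) ≠ 0; in particular deg(n₁) ≤ t_{i₁}(S/I) and deg(n₂) ≤ t_{i₂}(S/I). -/

import Mathlib

open Finsupp

noncomputable section

variable (K : Type) [Field K]

section Core
variable (P : Type) [Preorder P]

/-- Order chains with `n` elements of the poset `P`, written as strictly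
decreasing tuples `(x₀ > x₁ > ⋯ > x_{n-1})`. -/
def OChain (n : ℕ) : Type := {c : Fin n → P // StrictAnti c}

/-- The chain group in "level" `n`: the `K`-vector space with basis the order chains with
`n` elements.  Level `n` corresponds to homological degree `n - 1`; in particular
`CGrp K P 0 ≅ K` is the reduced part `C̃₋₁`. -/
abbrev CGrp (n : ℕ) : Type := OChain P n →₀ K

/-- Deletion of the `k`-th entry of an order chain. -/
def odel {n : ℕ} (k : Fin (n + 1)) (c : OChain P (n + 1)) : OChain P n :=
  ⟨c.1 ∘ k.succAbove, c.2.comp_strictMono (Fin.strictMono_succAbove k)⟩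

/-- The simplicial boundary map (of the reduced simplicial chain complex of the order
complex), from level `n+1` to level `n`. -/
def cbdry (n : ℕ) : CGrp K P (n + 1) →ₗ[K] CGrp K P n :=
  Finsupp.lsum K fun c => ∑ k : Fin (n + 1), ((-1 : K) ^ (k : ℕ)) • Finsupp.lsingle (odel P k c)

/-- The cycles in level `n` (every level-0 chain, i.e. multiple of the empty chain,
is a cycle). -/
def cyclesAt : (n : ℕ) → Submodule K (CGrp K P n)
  | 0 => ⊤
  | (n + 1) => LinearMap.ker (cbdry K P n)

/-- The boundaries in level `n`. -/
def boundariesIn (n : ℕ) : Submodule K (CGrp K P n) :=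
  LinearMap.range (cbdry K P n)

/-- `H̃_{n-1}(P) ≠ 0`: nontriviality of the reduced simplicial homology (with coefficients
in `K`) of the order complex of `P` in degree `n - 1` (level `n`). -/
def RHomNontrivial (n : ℕ) : Prop := ¬ cyclesAt K P n ≤ boundariesIn K P n

end Core

section Monomial

variable (nv : ℕ)

/-- The polynomial ring `S = K[x₁, …, xₙ]`. -/
abbrev PolyS : Type := MvPolynomial (Fin nv) K

/-- The monomial `x^d` attached to an exponent vector `d`. -/
def monOf (d : Fin nv → ℕ) : PolyS K nv :=
  MvPolynomial.monomial (Finsupp.equivFunOnFinite.symm d) 1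

/-- `I` is a monomial ideal: it is generated by monomials. -/
def IsMonomialIdeal (I : Ideal (PolyS K nv)) : Prop :=
  ∃ G : Set (Fin nv → ℕ), I = Ideal.span (monOf K nv '' G)

/-- The minimal monomial generating set `G(I)` of a monomial ideal: exponent vectors of
the monomials of `I` that are minimal with respect to divisibility. -/
def minGens (I : Ideal (PolyS K nv)) : Set (Fin nv → ℕ) :=
  {d | monOf K nv d ∈ I ∧ ∀ d' < d, monOf K nv d' ∉ I}

/-- The underlying set of the LCM-lattice of a monomial ideal: all least common multiples
(= pointwise suprema of exponent vectors) of subsets of the minimal generators, ordered by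
divisibility (= the pointwise order).  The empty subset contributes `lcm ∅ = 1`, i.e. the
zero exponent vector. -/
def lcmSet (I : Ideal (PolyS K nv)) : Set (Fin nv → ℕ) :=
  {m | ∃ B : Finset (Fin nv → ℕ), ↑B ⊆ minGens K nv I ∧ m = B.sup id}

/-- The open interval `(1, m)` in the LCM-lattice of `I`. -/
def openInt (I : Ideal (PolyS K nv)) (m : Fin nv → ℕ) : Set (Fin nv → ℕ) :=
  {p | p ∈ lcmSet K nv I ∧ 0 < p ∧ p < m}

/-- Total degree of a monomial given by its exponent vector. -/
def degTot (m : Fin nv → ℕ) : ℕ := ∑ r, m r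

open Classical in
/-- The multigraded Betti number `β_{i,m}(S/I) = dim_K Tor_i^S(S/I, K)_m` of a monomial
ideal, via the Gasharov–Peeva–Welker formula: for `i ≥ 1` and `m` in the LCM-lattice,
`β_{i,m}(S/I) = dim_K H̃_{i-2}((1, m))` (reduced homology of the order complex of the open
interval in the LCM-lattice; degree `i-2` is level `i-1`; the dimension of the homology is
the dimension of the cycles minus the dimension of the boundaries); moreover `β_{0,m} = 1` iff
`m = 1`, and `β_{i,m} = 0` for `m` outside the LCM-lattice. -/
noncomputable def multiBetti (I : Ideal (PolyS K nv)) (i : ℕ) (m : Fin nv → ℕ) : ℕ :=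
  if i = 0 then (if m = 0 then 1 else 0)
  else if m ∈ lcmSet K nv I ∧ m ≠ 0 then
    Module.finrank K ↥(cyclesAt K ↥(openInt K nv I m) (i - 1)) -
      Module.finrank K ↥(boundariesIn K ↥(openInt K nv I m) (i - 1))
  else 0

/-- The graded Betti number `β_{i,j}(S/I) = dim_K Tor_i^S(S/I, K)_j`: the sum of the
multigraded Betti numbers over the multidegrees of total degree `j`. -/
noncomputable def betti (I : Ideal (PolyS K nv)) (i j : ℕ) : ℕ :=
  ∑ᶠ m ∈ {m : Fin nv → ℕ | degTot nv m = j}, multiBetti K nv I i m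

/-- The maximal shift `t_i(S/I) = max { j : β_{i,j}(S/I) ≠ 0 }`, with `t_i(S/I) = 0`
if `β_{i,j}(S/I) = 0` for all `j` (the supremum over the empty set of naturals is `0`). -/
noncomputable def tshift (I : Ideal (PolyS K nv)) (i : ℕ) : ℕ :=
  sSup {j | betti K nv I i j ≠ 0}

/-- `a_i(S/I)`: the number of multidegrees `m` with `β_{i,m}(S/I) ≠ 0`. -/
noncomputable def acount (I : Ideal (PolyS K nv)) (i : ℕ) : ℕ :=
  {m : Fin nv → ℕ | multiBetti K nv I i m ≠ 0}.ncard

end Monomial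

/-!
In an lcm-lattice `L`, the reduced homology of the open interval `(⊥, x)` detects the generators
of multidegree `x` of the minimal resolution: the homology of the subcomplex of labels `< x` is
the same for all resolutions with labels in `L`, and in the bar complex, whose basis consists of
order chains labelled by their maximum, this subcomplex is the chain complex of the interval.

It remains to show that if a minimal resolution `F` has a generator `e₀` of degree `j` labelled
`⊤` and `a, b ≤ j ≤ a + b`, then some generators `e` of `F` and `g` of another resolution `G`, of
degrees `a` and `b`, have labels with join `⊤`. Bilinear forms on `F_p × G_q` supported on pairs
of generators with join `⊤` form a double complex. It is exact in the direction of `F` when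
`q > 0`, because the part of `F` with labels `≤ x` is contractible inside the part with labels
`≤ x ⊔ n` for `n ≠ ⊥`, and likewise in the direction of `G`. The form `φ = e₀* ⊗ 1` of bidegree
`(j, 0)` is a cocycle by minimality. If no `e` and `g` as above exist, the zigzag that starts at
`φ` reaches a zero form at second degree `b`, and unwinding it gives a form `ω` with
`φ(u, dv) = ω(du, dv)`. Taking `u = e₀` and `dv` the generator of `G₀`, the left side is `1`, and
the right side is `0` since all labels in `d e₀` are `< ⊤`.
-/

theorem supported_le_iff {R α : Type*} [Semiring R] {s : Set α} {N : Submodule R (α →₀ R)} :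
    supported R R s ≤ N ↔ ∀ a ∈ s, single a 1 ∈ N := by
  rw [supported_eq_span_single, Submodule.span_le, Set.image_subset_iff]
  rfl

/-- A complex of free modules with given bases, each basis element carrying a label in a poset,
such that the differential does not increase labels. This is the combinatorial shadow of a
multigraded free complex, the labels being the multidegrees of the generators. -/
structure LabelledComplex (R : Type*) [CommRing R] (L : Type*) [PartialOrder L] where
  /-- The basis in homological degree `i`. -/
  ι : ℕ → Type*
  /-- The label of a basis element. -/
  lab : ∀ {i}, ι i → L
  /-- The differential from degree `i + 1` to degree `i`. -/
  d : ∀ i, (ι (i + 1) →₀ R) →ₗ[R] (ι i →₀ R)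
  d_d : ∀ i u, d i (d (i + 1) u) = 0
  lab_d : ∀ i (e : ι (i + 1)), d i (single e 1) ∈ supported R R {f | lab f ≤ lab e}

namespace LabelledComplex

variable {R : Type*} [CommRing R] {L : Type*}

section Chains

variable [PartialOrder L] {F G H : LabelledComplex R L}

/-- The chains of degree `i` that involve only basis elements with label in `s`. -/
def chainsIn (F : LabelledComplex R L) (i : ℕ) (s : Set L) : Submodule R (F.ι i →₀ R) :=
  supported R R {e | F.lab e ∈ s}

/-- The cycles of degree `i`. The complex is not augmented: every chain of degree `0` is a
cycle. -/
def cycles (F : LabelledComplex R L) : (i : ℕ) → Submodule R (F.ι i →₀ R)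
  | 0 => ⊤
  | i + 1 => LinearMap.ker (F.d i)

theorem mem_chainsIn_iff {i : ℕ} {s : Set L} {u : F.ι i →₀ R} :
    u ∈ F.chainsIn i s ↔ ∀ e, u e ≠ 0 → F.lab e ∈ s := by
  rw [chainsIn, mem_supported']
  exact forall_congr' fun e => not_imp_comm

theorem chainsIn_le_iff {i : ℕ} {s : Set L} {N : Submodule R (F.ι i →₀ R)} :
    F.chainsIn i s ≤ N ↔ ∀ e, F.lab e ∈ s → single e 1 ∈ N :=
  supported_le_iff

theorem chainsIn_mono {i : ℕ} {s t : Set L} (h : s ⊆ t) : F.chainsIn i s ≤ F.chainsIn i t :=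
  supported_mono fun _ he => h he

theorem single_mem_chainsIn {i : ℕ} {e : F.ι i} {s : Set L} (h : F.lab e ∈ s) :
    single e (1 : R) ∈ F.chainsIn i s :=
  single_mem_supported R 1 h

theorem d_mem_cycles (i : ℕ) (u : F.ι (i + 1) →₀ R) : F.d i u ∈ F.cycles i := by
  cases i with
  | zero => trivial
  | succ i => exact F.d_d i u

/-- A linear map between chain groups is bounded by `σ` if it sends a basis element labelled `x`
to a combination of basis elements with labels `≤ σ x`. -/
def IsLabelBounded {i j : ℕ} (σ : L → L) (f : (F.ι i →₀ R) →ₗ[R] (G.ι j →₀ R)) : Prop :=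
  ∀ e, f (single e 1) ∈ G.chainsIn j (Set.Iic (σ (F.lab e)))

theorem isLabelBounded_d (i : ℕ) : IsLabelBounded id (F.d i) :=
  F.lab_d i

theorem isLabelBounded_id {i : ℕ} {σ : L → L} (hσ : ∀ x, x ≤ σ x) :
    IsLabelBounded σ (LinearMap.id : (F.ι i →₀ R) →ₗ[R] _) :=
  fun _ => single_mem_chainsIn (hσ _)

section IsLabelBounded

variable {i j k : ℕ} {σ τ : L → L} {f f' : (F.ι i →₀ R) →ₗ[R] (G.ι j →₀ R)}
  {g : (G.ι j →₀ R) →ₗ[R] (H.ι k →₀ R)}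

theorem IsLabelBounded.map_mem_chainsIn (hf : IsLabelBounded σ f) {s t : Set L}
    (hst : ∀ x ∈ s, Set.Iic (σ x) ⊆ t) {u : F.ι i →₀ R} (hu : u ∈ F.chainsIn i s) :
    f u ∈ G.chainsIn j t :=
  chainsIn_le_iff (N := (G.chainsIn j t).comap f).mpr
    (fun e he => chainsIn_mono (hst _ he) (hf e)) hu

theorem IsLabelBounded.map_mem_of_isLowerSet (hf : IsLabelBounded id f) {s : Set L}
    (hs : IsLowerSet s) {u : F.ι i →₀ R} (hu : u ∈ F.chainsIn i s) : f u ∈ G.chainsIn j s :=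
  hf.map_mem_chainsIn (fun _ hx _ hy => hs hy hx) hu

theorem IsLabelBounded.sub (hf : IsLabelBounded σ f) (hf' : IsLabelBounded σ f') :
    IsLabelBounded σ (f - f') :=
  fun e => sub_mem (hf e) (hf' e)

theorem IsLabelBounded.comp (hg : IsLabelBounded τ g) (hτ : Monotone τ)
    (hf : IsLabelBounded σ f) : IsLabelBounded (τ ∘ σ) (g ∘ₗ f) :=
  fun e => hg.map_mem_chainsIn (fun _ hx => Set.Iic_subset_Iic.mpr (hτ hx)) (hf e)

end IsLabelBounded

/-- A labelled complex is minimal if its differential strictly decreases labels. -/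
def IsMinimal (F : LabelledComplex R L) : Prop :=
  ∀ i (e : F.ι (i + 1)), F.d i (single e 1) ∈ F.chainsIn i (Set.Iio (F.lab e))

theorem IsMinimal.d_mem_Iio (hm : F.IsMinimal) {i : ℕ} {x : L} {u : F.ι (i + 1) →₀ R}
    (hu : u ∈ F.chainsIn (i + 1) (Set.Iic x)) : F.d i u ∈ F.chainsIn i (Set.Iio x) :=
  chainsIn_le_iff (s := Set.Iic x) (N := (F.chainsIn i (Set.Iio x)).comap (F.d i)).mpr
    (fun e he => chainsIn_mono (Set.Iio_subset_Iio he) (hm i e)) hu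

/-- A chain map that does not increase labels. -/
structure Hom (F G : LabelledComplex R L) where
  /-- The component in degree `i`. -/
  map : ∀ i, (F.ι i →₀ R) →ₗ[R] (G.ι i →₀ R)
  map_d : ∀ i u, G.d i (map (i + 1) u) = map i (F.d i u)
  isLabelBounded : ∀ i, IsLabelBounded id (map i)

theorem Hom.map_mem_cycles (f : Hom F G) {i : ℕ} {w : F.ι i →₀ R} (hw : w ∈ F.cycles i) :
    f.map i w ∈ G.cycles i := by
  cases i with
  | zero => trivial
  | succ i =>
    change G.d i _ = 0
    rw [f.map_d, show F.d i w = 0 from hw, map_zero]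

end Chains

section Resolution

variable [PartialOrder L] [OrderBot L] {F G : LabelledComplex R L}

/-- A labelled complex is a resolution if its degree `0` part is spanned by a single basis
element, which is the only one labelled `⊥` in the complex, and the subcomplex of labels `≤ x` is
an exact complex for every `x ≠ ⊥`, including in degree `0`. For an lcm-lattice these are the
resolutions of `S/I`. -/
structure IsResolution (F : LabelledComplex R L) : Prop where
  unique_zero : Nonempty (Unique (F.ι 0))
  lab_zero : ∀ e : F.ι 0, F.lab e = ⊥
  lab_succ : ∀ i (e : F.ι (i + 1)), F.lab e ≠ ⊥
  exact : ∀ x ≠ ⊥, ∀ i, ∀ u ∈ F.chainsIn i (Set.Iic x), u ∈ F.cycles i →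
    ∃ v ∈ F.chainsIn (i + 1) (Set.Iic x), F.d i v = u

theorem IsResolution.exists_lift (hG : G.IsResolution) {i j : ℕ} {σ : L → L}
    {t : (F.ι i →₀ R) →ₗ[R] (G.ι j →₀ R)} (ht : IsLabelBounded σ t)
    (hσ : ∀ e : F.ι i, σ (F.lab e) ≠ ⊥) (hc : ∀ u, t u ∈ G.cycles j) :
    ∃ h : (F.ι i →₀ R) →ₗ[R] (G.ι (j + 1) →₀ R),
      IsLabelBounded σ h ∧ ∀ u, G.d j (h u) = t u := by
  choose v hv hdv using fun e => hG.exact _ (hσ e) j _ (ht e) (hc _)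
  have hdt : G.d j ∘ₗ linearCombination R v = t := lhom_ext' fun e => by
    ext1
    simpa only [LinearMap.comp_apply, lsingle_apply, linearCombination_single, one_smul]
      using hdv e
  refine ⟨linearCombination R v, fun e => ?_, LinearMap.congr_fun hdt⟩
  simpa only [linearCombination_single, one_smul] using hv e

theorem IsResolution.exists_homotopy (hG : G.IsResolution)
    (hF : ∀ i (e : F.ι (i + 1)), F.lab e ≠ ⊥) {T : ∀ i, (F.ι i →₀ R) →ₗ[R] (G.ι i →₀ R)}
    (hT : ∀ i u, G.d i (T (i + 1) u) = T i (F.d i u)) {σ : L → L} (hσ : Monotone σ)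
    (hσ' : ∀ x, x ≤ σ x) (hTσ : ∀ i, IsLabelBounded σ (T i))
    {h₀ : (F.ι 0 →₀ R) →ₗ[R] (G.ι 1 →₀ R)} (hh₀ : IsLabelBounded σ h₀)
    (hdh₀ : ∀ u, G.d 0 (h₀ u) = T 0 u) (i : ℕ) :
    ∃ h : (F.ι i →₀ R) →ₗ[R] (G.ι (i + 1) →₀ R),
      IsLabelBounded σ h ∧ ∀ w ∈ F.cycles i, G.d i (h w) = T i w := by
  induction i with
  | zero => exact ⟨h₀, hh₀, fun w _ => hdh₀ w⟩
  | succ i ih =>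
    obtain ⟨h, hh, hd⟩ := ih
    obtain ⟨h', hh', hd'⟩ := hG.exists_lift (t := T (i + 1) - h ∘ₗ F.d i)
      ((hTσ _).sub (hh.comp hσ (isLabelBounded_d i)))
      (fun e => ((bot_lt_iff_ne_bot.mpr (hF i e)).trans_le (hσ' _)).ne')
      (fun u => show G.d i _ = 0 by
        rw [LinearMap.sub_apply, map_sub, hT, LinearMap.comp_apply, hd _ (d_mem_cycles _ _),
          sub_self])
    refine ⟨h', hh', fun w hw => ?_⟩
    rw [hd', LinearMap.sub_apply, LinearMap.comp_apply, show F.d i w = 0 from hw, map_zero,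
      sub_zero]

theorem IsResolution.exists_hom (hF : F.IsResolution) (hG : G.IsResolution) :
    ∃ f : Hom F G, ∀ e e', f.map 0 (single e 1) = single e' 1 := by
  obtain ⟨_⟩ := hG.unique_zero
  let Component (i : ℕ) : Type _ := {f : (F.ι i →₀ R) →ₗ[R] (G.ι i →₀ R) //
    IsLabelBounded id f ∧ ∀ w ∈ F.cycles i, f w ∈ G.cycles i}
  have extend (i : ℕ) (f : Component i) :
      ∃ f' : Component (i + 1), ∀ u, G.d i (f'.1 u) = f.1 (F.d i u) := by
    obtain ⟨f, hf, hc⟩ := f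
    obtain ⟨f', hf', hd⟩ := hG.exists_lift (t := f ∘ₗ F.d i)
      (hf.comp monotone_id (isLabelBounded_d i)) (hF.lab_succ i)
      fun u => hc _ (d_mem_cycles i u)
    refine ⟨⟨f', hf', fun w hw => ?_⟩, hd⟩
    change G.d i _ = 0
    rw [hd, LinearMap.comp_apply, show F.d i w = 0 from hw, map_zero]
  choose next hnext using extend
  have hzero (e : F.ι 0) : linearCombination R (fun _ : F.ι 0 => single (default : G.ι 0) (1 : R))
      (single e 1) = single default 1 := by
    rw [linearCombination_single, one_smul]
  let zero : Component 0 := ⟨linearCombination R fun _ => single default 1, fun e => by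
    rw [hzero]
    exact single_mem_chainsIn ((hG.lab_zero _).trans_le bot_le), fun _ _ => trivial⟩
  let f (i : ℕ) : Component i := Nat.rec zero next i
  refine ⟨⟨fun i => (f i).1, fun i => hnext i (f i), fun i => (f i).2.1⟩, fun e e' => ?_⟩
  rw [Subsingleton.elim e' default]
  exact hzero e

/-- The subcomplex of labels `< x` has nonzero homology in degree `i`; in degree `0` this is the
cokernel of the differential, so that the homology here is reduced. -/
def HomologyBelow (F : LabelledComplex R L) (i : ℕ) (x : L) : Prop :=
  ∃ z ∈ F.chainsIn i (Set.Iio x), z ∈ F.cycles i ∧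
    ∀ v ∈ F.chainsIn (i + 1) (Set.Iio x), F.d i v ≠ z

theorem HomologyBelow.of_isResolution (hF : F.IsResolution) (hG : G.IsResolution) {i : ℕ}
    {x : L} (h : F.HomologyBelow i x) : G.HomologyBelow i x := by
  obtain ⟨z, hz, hzc, hzb⟩ := h
  obtain ⟨f, hf⟩ := hF.exists_hom hG
  obtain ⟨g, hg⟩ := hG.exists_hom hF
  obtain ⟨_⟩ := hF.unique_zero
  obtain ⟨_⟩ := hG.unique_zero
  have hgf₀ : g.map 0 ∘ₗ f.map 0 = LinearMap.id := lhom_ext' fun e => by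
    ext1
    simp only [LinearMap.comp_apply, lsingle_apply, hf e default, hg default e,
      LinearMap.id_apply]
  obtain ⟨h, hh, hdh⟩ := hF.exists_homotopy hF.lab_succ
    (T := fun i => g.map i ∘ₗ f.map i - LinearMap.id)
    (fun i u => by simp only [LinearMap.sub_apply, LinearMap.comp_apply, LinearMap.id_apply,
      map_sub, g.map_d, f.map_d])
    monotone_id (fun _ => le_rfl)
    (fun i => ((g.isLabelBounded i).comp monotone_id (f.isLabelBounded i)).sub
      (isLabelBounded_id fun _ => le_rfl))
    (h₀ := 0) (fun _ => zero_mem _) (fun u => by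
      simp only [hgf₀, LinearMap.zero_apply, map_zero, LinearMap.sub_apply, sub_self]) i
  have hlow := isLowerSet_Iio x
  refine ⟨f.map i z, (f.isLabelBounded i).map_mem_of_isLowerSet hlow hz, f.map_mem_cycles hzc,
    fun v hv hdv => hzb (g.map (i + 1) v - h z) (sub_mem
      ((g.isLabelBounded _).map_mem_of_isLowerSet hlow hv) (hh.map_mem_of_isLowerSet hlow hz)) ?_⟩
  rw [map_sub, g.map_d, hdv, hdh z hzc]
  exact sub_sub_cancel _ z

theorem IsMinimal.exists_lab_eq_iff [Nontrivial R] (hm : F.IsMinimal) (hF : F.IsResolution)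
    {i : ℕ} {x : L} (hx : x ≠ ⊥) :
    (∃ e : F.ι (i + 1), F.lab e = x) ↔ F.HomologyBelow i x := by
  constructor
  · rintro ⟨e, rfl⟩
    have he : single e (1 : R) ∈ F.chainsIn (i + 1) (Set.Iic (F.lab e)) :=
      single_mem_chainsIn le_rfl
    refine ⟨_, hm i e, d_mem_cycles _ _, fun v hv hdv => ?_⟩
    obtain ⟨w, hw, hdw⟩ := hF.exact _ hx (i + 1) (single e 1 - v)
      (sub_mem he (chainsIn_mono Set.Iio_subset_Iic_self hv))
      (show F.d i _ = 0 by rw [map_sub, hdv, sub_self])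
    have he' : single e (1 : R) ∈ F.chainsIn (i + 1) (Set.Iio (F.lab e)) := by
      rw [← sub_add_cancel (single e 1) v, ← hdw]
      exact add_mem (hm.d_mem_Iio hw) hv
    exact lt_irrefl _ (mem_chainsIn_iff.mp he' e (by rw [single_eq_same]; exact one_ne_zero))
  · rintro ⟨z, hz, hzc, hzb⟩
    by_contra! hne
    obtain ⟨v, hv, hdv⟩ := hF.exact x hx i z (chainsIn_mono Set.Iio_subset_Iic_self hz) hzc
    exact hzb v (mem_chainsIn_iff.mpr fun e he =>
      (mem_chainsIn_iff.mp hv e he).lt_of_ne (hne e)) hdv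

end Resolution

theorem IsResolution.exists_contraction {L : Type*} [SemilatticeSup L] [OrderBot L]
    {F : LabelledComplex R L} (hF : F.IsResolution) {n : L} (hn : n ≠ ⊥) (p : ℕ) :
    ∃ h : (F.ι p →₀ R) →ₗ[R] (F.ι (p + 1) →₀ R),
      IsLabelBounded (· ⊔ n) h ∧ ∀ w ∈ F.cycles p, F.d p (h w) = w := by
  obtain ⟨h₀, hh₀, hdh₀⟩ := hF.exists_lift (i := 0) (j := 0) (t := LinearMap.id)
    (isLabelBounded_id fun _ => le_sup_left) (fun _ h => hn (sup_eq_bot_iff.mp h).2)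
    fun _ => trivial
  exact hF.exists_homotopy hF.lab_succ (T := fun _ => LinearMap.id) (fun _ _ => rfl)
    (fun _ _ h => sup_le_sup_right h n) (fun _ => le_sup_left)
    (fun _ => isLabelBounded_id fun _ => le_sup_left) hh₀ hdh₀ p

theorem IsResolution.exists_d_eq_of_mem_cycles {L : Type*} [PartialOrder L] [BoundedOrder L]
    [Nontrivial L] {F : LabelledComplex R L} (hF : F.IsResolution) {i : ℕ} {u : F.ι i →₀ R}
    (hu : u ∈ F.cycles i) : ∃ v, F.d i v = u :=
  have ⟨v, _, hv⟩ := hF.exact ⊤ top_ne_bot i u (mem_chainsIn_iff.mpr fun _ _ => le_top) hu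
  ⟨v, hv⟩

/-! ### Top pairings -/

section Pairing

variable [PartialOrder L] {F G : LabelledComplex R L}

/-- Bilinear pairings of the chains of degree `p` of `F` with the chains of degree `q` of `G`;
as `p` and `q` vary they form the double complex dual to `F ⊗ G`. -/
abbrev Pairing (F G : LabelledComplex R L) (p q : ℕ) :=
  (F.ι p →₀ R) →ₗ[R] (G.ι q →₀ R) →ₗ[R] R

theorem chainsIn_le_ker_flip_iff {p q : ℕ} {φ : Pairing F G p q} {s : Set L} :
    G.chainsIn q s ≤ LinearMap.ker φ.flip ↔ ∀ f, G.lab f ∈ s → ∀ u, φ u (single f 1) = 0 := by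
  simp only [chainsIn_le_iff, LinearMap.mem_ker, LinearMap.ext_iff, LinearMap.flip_apply,
    LinearMap.zero_apply]

theorem pairing_ext {p q : ℕ} {φ ψ : Pairing F G p q}
    (h : ∀ e f, φ (single e 1) (single f 1) = ψ (single e 1) (single f 1)) : φ = ψ := by
  ext e f
  exact h e f

end Pairing

section TopPairing

variable [SemilatticeSup L] [OrderTop L] {F G : LabelledComplex R L}

/-- A pairing is a top pairing if it is supported on the pairs of basis elements whose labels have
join `⊤`. These pairings form the double complex dual to the degree `⊤` part of `F ⊗ G` modulo
lower degrees. -/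
def IsTopPairing {p q : ℕ} (φ : Pairing F G p q) : Prop :=
  ∀ e f, φ (single e 1) (single f 1) ≠ 0 → F.lab e ⊔ G.lab f = ⊤

theorem isLowerSet_sup_ne_top (y : L) : IsLowerSet {x : L | x ⊔ y ≠ ⊤} :=
  fun _ _ hba ha hb => ha (top_le_iff.mp (hb ▸ sup_le_sup_right hba y))

namespace IsTopPairing

variable {p q : ℕ} {φ ψ : Pairing F G p q}

theorem apply_single_eq_zero (hφ : IsTopPairing φ) {e : F.ι p} {f : G.ι q}
    (h : F.lab e ⊔ G.lab f ≠ ⊤) : φ (single e 1) (single f 1) = 0 :=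
  not_imp_comm.mp (hφ e f) h

theorem apply_eq_zero (hφ : IsTopPairing φ) {u : F.ι p →₀ R} {f : G.ι q}
    (hu : u ∈ F.chainsIn p {x | x ⊔ G.lab f ≠ ⊤}) : φ u (single f 1) = 0 :=
  chainsIn_le_iff (N := LinearMap.ker (φ.flip (single f 1))).mpr
    (fun _ he => hφ.apply_single_eq_zero he) hu

theorem flip (hφ : IsTopPairing φ) : IsTopPairing φ.flip :=
  fun f e h => sup_comm _ _ |>.trans (hφ e f h)

theorem sub (hφ : IsTopPairing φ) (hψ : IsTopPairing ψ) : IsTopPairing (φ - ψ) :=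
  fun _ _ => not_imp_comm.mp fun h => by
    rw [LinearMap.sub_apply, LinearMap.sub_apply, hφ.apply_single_eq_zero h,
      hψ.apply_single_eq_zero h, sub_self]

theorem comp_d (hφ : IsTopPairing φ) : IsTopPairing (φ ∘ₗ F.d p) :=
  fun _ _ => not_imp_comm.mp fun h => hφ.apply_eq_zero
    ((isLabelBounded_d p).map_mem_of_isLowerSet (isLowerSet_sup_ne_top _) (single_mem_chainsIn h))

theorem compl₂_d (hφ : IsTopPairing φ) : IsTopPairing (φ.compl₂ (G.d q)) :=
  hφ.flip.comp_d.flip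

theorem lowerClosure_le_ker_flip (hφ : IsTopPairing φ) {b : ℕ}
    (hab : ∀ (e : F.ι p) (g : G.ι b), F.lab e ⊔ G.lab g ≠ ⊤) :
    G.chainsIn q (lowerClosure (Set.range (G.lab (i := b)))) ≤ LinearMap.ker φ.flip := by
  rw [chainsIn_le_ker_flip_iff]
  rintro f ⟨_, ⟨g, rfl⟩, hfg⟩ u
  exact hφ.apply_eq_zero (mem_chainsIn_iff.mpr fun e _ htop =>
    hab e g (top_le_iff.mp (htop ▸ sup_le_sup_left hfg _)))

end IsTopPairing

end TopPairing

section Descent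

variable [SemilatticeSup L] [BoundedOrder L] [Nontrivial L] {F G : LabelledComplex R L}
  {a b p q : ℕ}

theorem IsTopPairing.exists_apply_d_eq (hF : F.IsResolution)
    (hG : ∀ f : G.ι q, G.lab f ≠ ⊥) {φ : Pairing F G (p + 1) q} (hφ : IsTopPairing φ)
    (hd : ∀ u v, φ (F.d (p + 1) u) v = 0) :
    ∃ ψ : Pairing F G p q, IsTopPairing ψ ∧ (∀ u v, ψ (F.d p u) v = φ u v) ∧
      ∀ s, G.chainsIn q s ≤ LinearMap.ker φ.flip → G.chainsIn q s ≤ LinearMap.ker ψ.flip := by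
  choose h hh hdh using fun f : G.ι q => hF.exists_contraction (hG f) p
  let ψ : Pairing F G p q := (linearCombination R fun f => φ.flip (single f 1) ∘ₗ h f).flip
  have hψ (u) (f) : ψ u (single f 1) = φ (h f u) (single f 1) := by
    simp only [ψ, LinearMap.flip_apply, linearCombination_single, one_smul, LinearMap.comp_apply]
  have hψd : ψ ∘ₗ F.d p = φ := pairing_ext fun e f => by
    rw [LinearMap.comp_apply, hψ]
    obtain ⟨w, hw⟩ := hF.exists_d_eq_of_mem_cycles (i := p + 1)
      (u := h f (F.d p (single e 1)) - single e 1)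
      (show F.d p _ = 0 by rw [map_sub, hdh f _ (d_mem_cycles _ _), sub_self])
    rw [← sub_eq_zero, ← LinearMap.sub_apply, ← map_sub, ← hw, hd]
  refine ⟨ψ, fun e f => not_imp_comm.mp fun hef => ?_,
    fun u v => LinearMap.congr_fun₂ hψd u v, fun s hs => ?_⟩
  · rw [hψ]
    refine hφ.apply_eq_zero (chainsIn_mono (fun x hx => ?_) (hh f e))
    exact isLowerSet_sup_ne_top _ hx (by rwa [Set.mem_ofPred_eq, sup_assoc, sup_idem])
  · rw [chainsIn_le_ker_flip_iff] at hs ⊢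
    exact fun f hf u => (hψ u f).trans (hs f hf _)

theorem IsTopPairing.exists_antidiagonal_step (hF : F.IsResolution) (hG : G.IsResolution)
    (hab : ∀ (e : F.ι a) (g : G.ι b), F.lab e ⊔ G.lab g ≠ ⊤)
    {φ : Pairing F G (p + 1) q} (hφ : IsTopPairing φ)
    (hd : ∀ u v, φ (F.d (p + 1) u) (G.d q v) = 0)
    (hker : p + 1 ≤ a →
      G.chainsIn q (lowerClosure (Set.range (G.lab (i := b)))) ≤ LinearMap.ker φ.flip) :
    ∃ ψ : Pairing F G p (q + 1), IsTopPairing ψ ∧ (∀ u v, ψ (F.d p u) v = φ u (G.d q v)) ∧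
      (p ≤ a → G.chainsIn (q + 1) (lowerClosure (Set.range (G.lab (i := b)))) ≤
        LinearMap.ker ψ.flip) := by
  obtain ⟨ψ, hψ, hψd, hψker⟩ := hφ.compl₂_d.exists_apply_d_eq hF (hG.lab_succ q) hd
  refine ⟨ψ, hψ, hψd, fun hpa => ?_⟩
  obtain rfl | hpa := hpa.eq_or_lt
  · exact hψ.lowerClosure_le_ker_flip hab
  · exact hψker _ fun v hv =>
      hker hpa ((isLabelBounded_d q).map_mem_of_isLowerSet (LowerSet.lower _) hv)

-- The zigzag along the antidiagonal through `φ`, by induction on its distance to second degree `b`.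
theorem IsTopPairing.exists_apply_d_d_eq (hF : F.IsResolution) (hG : G.IsResolution)
    (hab : ∀ (e : F.ι a) (g : G.ι b), F.lab e ⊔ G.lab g ≠ ⊤) (hqb : q < b)
    (hbpq : b ≤ p + 1 + q) (hpqab : p + 1 + q ≤ a + b)
    {φ : Pairing F G (p + 1) q} (hφ : IsTopPairing φ)
    (hd : ∀ u v, φ (F.d (p + 1) u) (G.d q v) = 0)
    (hker : p + 1 ≤ a →
      G.chainsIn q (lowerClosure (Set.range (G.lab (i := b)))) ≤ LinearMap.ker φ.flip) :
    ∃ ω : Pairing F G p q, IsTopPairing ω ∧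
      ∀ u v, ω (F.d p u) (G.d q v) = φ u (G.d q v) := by
  induction hn : b - (q + 1) generalizing p q with
  | zero =>
    obtain rfl : q + 1 = b := by omega
    obtain ⟨ψ, -, hψd, hψker⟩ := hφ.exists_antidiagonal_step hF hG hab hd hker
    refine ⟨0, fun _ _ h => absurd rfl h, fun u v => ?_⟩
    have hv : v ∈ G.chainsIn (q + 1) (lowerClosure (Set.range (G.lab (i := q + 1)))) :=
      mem_chainsIn_iff.mpr fun g _ => subset_lowerClosure ⟨g, rfl⟩
    rw [← hψd]
    exact (LinearMap.congr_fun (hψker (by omega) hv) (F.d p u)).symm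
  | succ n ih =>
    obtain ⟨p, rfl⟩ : ∃ p', p = p' + 1 := Nat.exists_eq_succ_of_ne_zero (by omega)
    obtain ⟨ψ, hψ, hψd, hψker⟩ := hφ.exists_antidiagonal_step hF hG hab hd hker
    obtain ⟨ω, hω, hωd⟩ := ih (by omega) (by omega) (by omega) hψ
      (fun u v => by rw [hψd, G.d_d, map_zero]) hψker (by omega)
    obtain ⟨χ, hχ, hχd, -⟩ := (hψ.sub hω.comp_d).flip.exists_apply_d_eq hG (hF.lab_succ p)
      (fun v u => sub_eq_zero.mpr (hωd u v).symm)
    refine ⟨χ.flip, hχ.flip, fun u v => (hχd v _).trans ?_⟩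
    rw [LinearMap.flip_apply, LinearMap.sub_apply, LinearMap.sub_apply, LinearMap.comp_apply,
      F.d_d, map_zero, LinearMap.zero_apply, sub_zero, hψd]

theorem IsMinimal.exists_sup_eq_top [Nontrivial R] (hm : F.IsMinimal) (hF : F.IsResolution)
    (hG : G.IsResolution) {j : ℕ} (hb : 0 < b) (haj : a ≤ j) (hbj : b ≤ j) (hjab : j ≤ a + b)
    {e₀ : F.ι j} (he₀ : F.lab e₀ = ⊤) :
    ∃ (e : F.ι a) (g : G.ι b), F.lab e ⊔ G.lab g = ⊤ := by
  by_contra! hab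
  obtain ⟨j, rfl⟩ : ∃ i, j = i + 1 := Nat.exists_eq_succ_of_ne_zero (by omega)
  obtain ⟨⟨g₀⟩, -⟩ := hG.unique_zero.some
  let φ : Pairing F G (j + 1) 0 :=
    (lapply e₀).smulRight (linearCombination R fun _ => (1 : R))
  have hφ (u) (v) : φ u v = u e₀ * linearCombination R (fun _ => (1 : R)) v := rfl
  have hφtop : IsTopPairing φ := fun e f h => by
    have he : single e (1 : R) e₀ ≠ 0 := left_ne_zero_of_mul h
    obtain rfl : e = e₀ := by_contra fun hne => he (single_eq_of_ne' hne)
    rw [he₀, top_sup_eq]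
  have hd (u) (v) : φ (F.d (j + 1) u) v = 0 := by
    have hu := hm.d_mem_Iio (x := ⊤) (mem_chainsIn_iff.mpr fun e (_ : u e ≠ 0) => le_top)
    rw [hφ, not_imp_comm.mp (mem_chainsIn_iff.mp hu e₀) (he₀ ▸ lt_irrefl _), zero_mul]
  obtain ⟨ω, hω, hωd⟩ := hφtop.exists_apply_d_d_eq hF hG hab hb hbj hjab (fun u v => hd u _)
    fun hja => by
      obtain rfl := haj.antisymm hja
      exact hφtop.lowerClosure_le_ker_flip hab
  obtain ⟨v, hv⟩ := hG.exists_d_eq_of_mem_cycles (i := 0) (u := single g₀ 1) trivial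
  have hω₀ : ω (F.d j (single e₀ 1)) (single g₀ 1) = 0 :=
    hω.apply_eq_zero (chainsIn_mono (fun x hx => by
      rw [Set.mem_ofPred_eq, hG.lab_zero, sup_bot_eq, ← he₀]
      exact hx.ne) (hm j e₀))
  have hφ₀ : φ (single e₀ 1) (single g₀ 1) = 1 := by
    rw [hφ, single_eq_same, linearCombination_single, one_smul, one_mul]
  exact one_ne_zero (hφ₀.symm.trans (by rw [← hv, ← hωd, hv, hω₀]))

end Descent

/-! ### The minimal resolution -/

section MinimalResolution

universe u v

/-- A step in the construction of a minimal resolution: a labelled basis and the cycles among the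
chains on it. -/
structure SyzygyStage (𝕜 : Type v) [Field 𝕜] (L : Type u) where
  /-- The basis. -/
  ι : Type max u v
  /-- The label of a basis element. -/
  lab : ι → L
  /-- The cycles. -/
  cycles : Submodule 𝕜 (ι →₀ 𝕜)

variable {𝕜 : Type v} [Field 𝕜] {L : Type u} [PartialOrder L] [OrderBot L]

namespace SyzygyStage

variable (s : SyzygyStage 𝕜 L) {x : L}

/-- The cycles with labels `≤ x`. -/
def cyclesLE (x : L) : Submodule 𝕜 (s.ι →₀ 𝕜) :=
  s.cycles ⊓ supported 𝕜 𝕜 {e | s.lab e ≤ x}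

/-- The cycles generated by cycles with labels bounded by some `y < x`, the label `y = ⊥` being
excluded as no generators are placed there. -/
def decomposable (x : L) : Submodule 𝕜 (s.ι →₀ 𝕜) :=
  ⨆ y : {y : L // y ≠ ⊥ ∧ y < x}, s.cyclesLE y

theorem decomposable_le_cyclesLE (x : L) : s.decomposable x ≤ s.cyclesLE x :=
  iSup_le fun y => inf_le_inf_left _ (supported_mono fun _ he => le_trans he y.2.2.le)

theorem exists_disjoint_decomposable (x : L) :
    ∃ W, Disjoint (s.decomposable x) W ∧ s.decomposable x ⊔ W = s.cyclesLE x :=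
  IsModularLattice.exists_disjoint_and_sup_eq (s.decomposable_le_cyclesLE x)

/-- A complement of the decomposable cycles in the cycles with labels `≤ x`. -/
def generatorSpace (x : L) : Submodule 𝕜 (s.ι →₀ 𝕜) :=
  (s.exists_disjoint_decomposable x).choose

theorem disjoint_generatorSpace (x : L) : Disjoint (s.decomposable x) (s.generatorSpace x) :=
  (s.exists_disjoint_decomposable x).choose_spec.1

theorem decomposable_sup_generatorSpace (x : L) :
    s.decomposable x ⊔ s.generatorSpace x = s.cyclesLE x :=
  (s.exists_disjoint_decomposable x).choose_spec.2

/-- The generators of the next step: a basis of the generator space of every label `x ≠ ⊥`. -/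
abbrev Generator : Type max u v :=
  Σ x : {x : L // x ≠ ⊥}, Module.Basis.ofVectorSpaceIndex 𝕜 (s.generatorSpace x)

/-- The cycle represented by a generator. -/
def toCycle (e : s.Generator) : s.ι →₀ 𝕜 :=
  (Module.Basis.ofVectorSpace 𝕜 (s.generatorSpace e.1) e.2 : s.ι →₀ 𝕜)

/-- The differential on the chains of generators. -/
def d : (s.Generator →₀ 𝕜) →ₗ[𝕜] (s.ι →₀ 𝕜) :=
  linearCombination 𝕜 s.toCycle

/-- The next step of the minimal resolution. -/
def next : SyzygyStage 𝕜 L where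
  ι := s.Generator
  lab e := e.1
  cycles := LinearMap.ker s.d

theorem d_single (e : s.Generator) : s.d (single e 1) = s.toCycle e := by
  rw [d, linearCombination_single, one_smul]

theorem d_single_mem_cyclesLE (e : s.Generator) : s.d (single e 1) ∈ s.cyclesLE e.1 := by
  rw [d_single, ← decomposable_sup_generatorSpace]
  exact Submodule.mem_sup_right (SetLike.coe_mem _)

theorem range_d_next_le_ker_d : LinearMap.range s.next.d ≤ LinearMap.ker s.d := by
  refine (range_linearCombination 𝕜).trans_le (Submodule.span_le.mpr ?_)
  rintro _ ⟨e, rfl⟩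
  exact s.next.d_single e ▸ (s.next.d_single_mem_cyclesLE e).1

theorem setOf_label_eq (hx : x ≠ ⊥) :
    {e : s.Generator | e.1 = x} = Set.range (Sigma.mk ⟨x, hx⟩) :=
  Set.ext fun ⟨_, t⟩ => ⟨by rintro rfl; exact ⟨t, rfl⟩, by rintro ⟨t, ⟨⟩⟩; rfl⟩

theorem linearIndepOn_toCycle (hx : x ≠ ⊥) :
    LinearIndepOn 𝕜 s.toCycle {e : s.Generator | e.1 = x} := by
  rw [setOf_label_eq s hx, linearIndepOn_range_iff sigma_mk_injective]
  exact (Module.Basis.ofVectorSpace 𝕜 (s.generatorSpace x)).linearIndependent.map'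
    (Submodule.subtype _) (Submodule.ker_subtype _)

theorem map_d_label_eq (hx : x ≠ ⊥) :
    (supported 𝕜 𝕜 {e : s.Generator | e.1 = x}).map s.d = s.generatorSpace x := by
  rw [d, ← span_image_eq_map_linearCombination, setOf_label_eq s hx, ← Set.range_comp]
  change Submodule.span 𝕜 (Set.range (Submodule.subtype _ ∘
    Module.Basis.ofVectorSpace 𝕜 (s.generatorSpace x))) = _
  rw [Set.range_comp, ← Submodule.map_span, Module.Basis.span_eq, Submodule.map_subtype_top]

theorem map_d_label_lt_le (x : L) :
    (supported 𝕜 𝕜 {e : s.Generator | e.1 < x}).map s.d ≤ s.decomposable x :=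
  Submodule.map_le_iff_le_comap.mpr <| supported_le_iff.mpr fun e he =>
    Submodule.mem_iSup_of_mem ⟨e.1, e.1.2, he⟩ (s.d_single_mem_cyclesLE e)

theorem cyclesLE_le_map_d [WellFoundedLT L] (hx : x ≠ ⊥) :
    s.cyclesLE x ≤ (supported 𝕜 𝕜 {e : s.Generator | e.1 ≤ x}).map s.d := by
  induction x using WellFoundedLT.induction with
  | ind x ih =>
    rw [← decomposable_sup_generatorSpace, ← map_d_label_eq s hx]
    refine sup_le (iSup_le fun ⟨y, hy, hyx⟩ => (ih y hyx hy).trans ?_) ?_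
    · exact Submodule.map_mono (supported_mono fun e he => le_trans he hyx.le)
    · exact Submodule.map_mono (supported_mono fun e he => le_of_eq he)

theorem mem_supported_lt_of_d_eq_zero (hx : x ≠ ⊥) {u : s.Generator →₀ 𝕜}
    (hu : u ∈ supported 𝕜 𝕜 {e : s.Generator | e.1 ≤ x}) (hdu : s.d u = 0) :
    u ∈ supported 𝕜 𝕜 {e : s.Generator | e.1 < x} := by
  have hunion : {e : s.Generator | (e.1 : L) ≤ x} = {e | e.1 = x} ∪ {e | e.1 < x} :=
    Set.ext fun _ => le_iff_eq_or_lt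
  rw [hunion, supported_union] at hu
  obtain ⟨u₁, hu₁, u₂, hu₂, rfl⟩ := Submodule.mem_sup.mp hu
  have hd₁ : s.d u₁ ∈ s.generatorSpace x := by
    rw [← map_d_label_eq s hx]
    exact Submodule.mem_map_of_mem hu₁
  have hd₂ : s.d u₂ ∈ s.decomposable x := s.map_d_label_lt_le x (Submodule.mem_map_of_mem hu₂)
  rw [map_add, add_eq_zero_iff_eq_neg] at hdu
  have hdu₁ : s.d u₁ = 0 :=
    Submodule.disjoint_def.mp (s.disjoint_generatorSpace x) _ (hdu ▸ neg_mem hd₂) hd₁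
  rwa [linearIndepOn_iff.mp (s.linearIndepOn_toCycle hx) u₁ hu₁ hdu₁, zero_add]

variable (𝕜 L) in
/-- The steps of the minimal resolution. -/
def stage : ℕ → SyzygyStage 𝕜 L
  | 0 => ⟨PUnit, fun _ => ⊥, ⊤⟩
  | i + 1 => (stage i).next

end SyzygyStage

variable (𝕜 L) in
/-- The minimal resolution, constructed by successively choosing minimal generators of the
cycles. -/
def minimalResolution : LabelledComplex 𝕜 L where
  ι i := (SyzygyStage.stage 𝕜 L i).ι
  lab {i} := (SyzygyStage.stage 𝕜 L i).lab
  d i := (SyzygyStage.stage 𝕜 L i).d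
  d_d i u := (SyzygyStage.stage 𝕜 L i).range_d_next_le_ker_d ⟨u, rfl⟩
  lab_d i e := ((SyzygyStage.stage 𝕜 L i).d_single_mem_cyclesLE e).2

theorem minimalResolution_cycles (i : ℕ) :
    (minimalResolution 𝕜 L).cycles i = (SyzygyStage.stage 𝕜 L i).cycles := by
  cases i <;> rfl

theorem minimalResolution_isMinimal : (minimalResolution 𝕜 L).IsMinimal := by
  rintro (_ | i) e
  · exact mem_chainsIn_iff.mpr fun _ _ => bot_lt_iff_ne_bot.mpr e.1.2
  · obtain ⟨hd, hle⟩ := (SyzygyStage.stage 𝕜 L (i + 1)).d_single_mem_cyclesLE e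
    exact (SyzygyStage.stage 𝕜 L i).mem_supported_lt_of_d_eq_zero e.1.2 hle hd

theorem minimalResolution_isResolution [WellFoundedLT L] :
    (minimalResolution 𝕜 L).IsResolution where
  unique_zero := ⟨inferInstanceAs (Unique PUnit)⟩
  lab_zero _ := rfl
  lab_succ _ e := e.1.2
  exact x hx i u hu hc := by
    rw [minimalResolution_cycles] at hc
    exact (SyzygyStage.stage 𝕜 L i).cyclesLE_le_map_d hx ⟨hc, hu⟩

end MinimalResolution

end LabelledComplex

/-! ### Order chains -/

section OrderChains

namespace OChain

section Preorder

variable {P Q : Type} [Preorder P] [Preorder Q] {n : ℕ}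

/-- Adjoining an element `x` on top of a chain of elements `< x`. -/
def cons (x : P) (c : OChain P n) (h : ∀ k, c.1 k < x) : OChain P (n + 1) :=
  ⟨Fin.cons x c.1, fun a b hab => by
    cases b using Fin.cases with
    | zero => exact absurd hab (Fin.not_lt_zero a)
    | succ b =>
      cases a using Fin.cases with
      | zero => exact h b
      | succ a => exact c.2 (Fin.succ_lt_succ_iff.mp hab)⟩

theorem odel_zero_cons {x : P} {c : OChain P n} (h : ∀ k, c.1 k < x) :
    odel P 0 (cons x c h) = c :=
  rfl

theorem odel_succ_cons {x : P} {c : OChain P (n + 1)} (h : ∀ k, c.1 k < x) (k : Fin (n + 1)) :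
    odel P k.succ (cons x c h) = cons x (odel P k c) fun l => h (k.succAbove l) := by
  refine Subtype.ext (funext fun l => ?_)
  cases l using Fin.cases with
  | zero => rfl
  | succ l => exact congrArg (Fin.cons x c.1 : Fin (n + 2) → P) (Fin.succ_succAbove_succ k l)

theorem exists_eq_cons (c : OChain P (n + 1)) : ∃ c' h, c = cons (c.1 0) c' h :=
  ⟨odel P 0 c, fun k => c.2 (Fin.succ_pos k), Subtype.ext (Fin.cons_self_tail c.1).symm⟩

/-- The image of a chain under an order embedding. -/
def map (φ : Q ↪o P) (c : OChain Q n) : OChain P n :=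
  ⟨φ ∘ c.1, φ.strictMono.comp_strictAnti c.2⟩

end Preorder

theorem map_injective {P Q : Type} [Preorder P] [PartialOrder Q] (φ : Q ↪o P) (n : ℕ) :
    Function.Injective (map φ (n := n)) :=
  fun _ _ h => Subtype.ext (φ.injective.comp_left (congrArg Subtype.val h))

theorem range_map {P Q : Type} [Preorder P] [Preorder Q] (φ : Q ↪o P) (n : ℕ) :
    Set.range (map φ (n := n)) = {c | ∀ k, c.1 k ∈ Set.range φ} := by
  refine Set.Subset.antisymm ?_ fun c hc => ?_
  · rintro _ ⟨c, rfl⟩ k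
    exact ⟨c.1 k, rfl⟩
  · choose q hq using hc
    exact ⟨⟨q, fun a b hab => φ.lt_iff_lt.mp (by rw [hq, hq]; exact c.2 hab)⟩,
      Subtype.ext (funext hq)⟩

end OChain

variable {K} {P Q : Type} {n : ℕ}

section Preorder

variable [Preorder P]

theorem cbdry_single (c : OChain P (n + 1)) :
    cbdry K P n (single c 1) = ∑ k : Fin (n + 1), (-1 : K) ^ (k : ℕ) • single (odel P k c) 1 := by
  simp only [cbdry, lsum_single, LinearMap.sum_apply, LinearMap.smul_apply, lsingle_apply]

open Classical in
variable (K n) in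
/-- The cone operator, adjoining `x` on top of every chain of elements `< x` and killing the
other chains. -/
def coneMap (x : P) : CGrp K P n →ₗ[K] CGrp K P (n + 1) :=
  linearCombination K fun c => if h : ∀ k, c.1 k < x then single (c.cons x h) 1 else 0

theorem coneMap_single {x : P} {c : OChain P n} (h : ∀ k, c.1 k < x) :
    coneMap K n x (single c 1) = single (c.cons x h) 1 := by
  rw [coneMap, linearCombination_single, one_smul, dif_pos h]

theorem coneMap_single_of_not {x : P} {c : OChain P n} (h : ¬ ∀ k, c.1 k < x) :
    coneMap K n x (single c 1) = 0 := by
  rw [coneMap, linearCombination_single, one_smul, dif_neg h]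

theorem coneMap_mem_supported (x : P) (u : CGrp K P n) :
    coneMap K n x u ∈ supported K K {c : OChain P (n + 1) | c.1 0 ≤ x} := by
  rw [coneMap, linearCombination_apply]
  refine sum_mem fun c _ => Submodule.smul_mem _ _ ?_
  split_ifs with h
  · exact single_mem_supported K 1 (le_refl x)
  · exact zero_mem _

theorem coneMap_coneMap (x : P) (u : CGrp K P n) :
    coneMap K (n + 1) x (coneMap K n x u) = 0 := by
  suffices h : coneMap K (n + 1) x ∘ₗ coneMap K n x = 0 from LinearMap.congr_fun h u
  ext c : 2
  rw [LinearMap.comp_apply, LinearMap.comp_apply, lsingle_apply]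
  by_cases h : ∀ k, c.1 k < x
  · rw [coneMap_single h, coneMap_single_of_not fun h' => lt_irrefl x (h' 0)]
    rfl
  · rw [coneMap_single_of_not h, map_zero]
    rfl

theorem cbdry_single_cons_zero {x : P} {c : OChain P 0} (h : ∀ k, c.1 k < x) :
    cbdry K P 0 (single (c.cons x h) 1) = single c 1 := by
  rw [cbdry_single, Fin.sum_univ_one, Fin.val_zero, pow_zero, one_smul, OChain.odel_zero_cons]

theorem cbdry_single_cons_succ {x : P} {c : OChain P (n + 1)} (h : ∀ k, c.1 k < x) :
    cbdry K P (n + 1) (single (c.cons x h) 1) =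
      single c 1 - coneMap K n x (cbdry K P n (single c 1)) := by
  rw [cbdry_single, Fin.sum_univ_succ, OChain.odel_zero_cons, Fin.val_zero, pow_zero, one_smul,
    cbdry_single, map_sum, sub_eq_add_neg, ← Finset.sum_neg_distrib]
  refine congrArg _ (Finset.sum_congr rfl fun k _ => ?_)
  rw [OChain.odel_succ_cons, map_smul, coneMap_single fun l => h (k.succAbove l), Fin.val_succ,
    pow_succ, mul_neg_one, neg_smul]

theorem cbdry_coneMap_zero (x : P) (u : CGrp K P 0) : cbdry K P 0 (coneMap K 0 x u) = u := by
  suffices h : cbdry K P 0 ∘ₗ coneMap K 0 x = LinearMap.id from LinearMap.congr_fun h u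
  ext c : 2
  rw [LinearMap.comp_apply, LinearMap.comp_apply, lsingle_apply,
    coneMap_single fun k => k.elim0, cbdry_single_cons_zero]
  rfl

theorem coneMap_cbdry_single_cons {x : P} {c : OChain P n} (h : ∀ k, c.1 k < x) :
    coneMap K n x (cbdry K P n (single (c.cons x h) 1)) = single (c.cons x h) 1 := by
  cases n with
  | zero => rw [cbdry_single_cons_zero, coneMap_single h]
  | succ n => rw [cbdry_single_cons_succ, map_sub, coneMap_coneMap, sub_zero, coneMap_single h]

theorem cbdry_single_mem_supported (c : OChain P (n + 2)) :
    cbdry K P (n + 1) (single c 1) ∈ supported K K {c' : OChain P (n + 1) | c'.1 0 ≤ c.1 0} := by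
  rw [cbdry_single]
  exact sum_mem fun k _ => Submodule.smul_mem _ _
    (single_mem_supported K 1 (c.2.antitone (Fin.zero_le _)))

end Preorder

section PartialOrder

variable [PartialOrder P]

theorem cbdry_coneMap_add_coneMap_cbdry {x : P} {u : CGrp K P (n + 1)}
    (hu : u ∈ supported K K {c : OChain P (n + 1) | c.1 0 ≤ x}) :
    cbdry K P (n + 1) (coneMap K (n + 1) x u) + coneMap K n x (cbdry K P n u) = u := by
  let h : CGrp K P (n + 1) →ₗ[K] CGrp K P (n + 1) :=
    cbdry K P (n + 1) ∘ₗ coneMap K (n + 1) x + coneMap K n x ∘ₗ cbdry K P n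
  refine supported_le_iff (N := LinearMap.eqLocus h LinearMap.id).mpr (fun c hc => ?_) hu
  change cbdry K P (n + 1) (coneMap K (n + 1) x (single c 1)) +
    coneMap K n x (cbdry K P n (single c 1)) = single c 1
  obtain hlt | rfl := lt_or_eq_of_le (show c.1 0 ≤ x from hc)
  · rw [coneMap_single fun k => (c.2.antitone (Fin.zero_le k)).trans_lt hlt,
      cbdry_single_cons_succ, sub_add_cancel]
  · rw [coneMap_single_of_not fun h => (h 0).false, map_zero, zero_add]
    obtain ⟨c', h, hc'⟩ := c.exists_eq_cons
    generalize c.1 0 = x at h hc'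
    rw [hc', coneMap_cbdry_single_cons]

theorem cbdry_cbdry (u : CGrp K P (n + 2)) : cbdry K P n (cbdry K P (n + 1) u) = 0 := by
  suffices h : cbdry K P n ∘ₗ cbdry K P (n + 1) = 0 from LinearMap.congr_fun h u
  induction n with
  | zero =>
    ext c : 2
    obtain ⟨c', h, hc⟩ := c.exists_eq_cons
    rw [LinearMap.comp_apply, LinearMap.comp_apply, lsingle_apply, hc, cbdry_single_cons_succ,
      map_sub, cbdry_coneMap_zero, sub_self]
    rfl
  | succ n ih =>
    ext c : 2
    obtain ⟨c', h, hc⟩ := c.exists_eq_cons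
    have hd : cbdry K P (n + 1) (single c' 1) ∈
        supported K K {f : OChain P (n + 1) | f.1 0 ≤ c.1 0} :=
      supported_mono (fun f hf => le_trans hf (h 0).le) (cbdry_single_mem_supported c')
    have hdd : cbdry K P n (cbdry K P (n + 1) (single c' 1)) = 0 :=
      LinearMap.congr_fun (ih 0) (single c' 1)
    have hcone := cbdry_coneMap_add_coneMap_cbdry hd
    rw [hdd, map_zero, add_zero] at hcone
    rw [LinearMap.comp_apply, LinearMap.comp_apply, lsingle_apply, hc, cbdry_single_cons_succ,
      map_sub, hcone, sub_self]
    rfl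

theorem boundariesIn_le_cyclesAt (n : ℕ) : boundariesIn K P n ≤ cyclesAt K P n := by
  cases n with
  | zero => exact le_top
  | succ n =>
    rintro _ ⟨u, rfl⟩
    exact cbdry_cbdry u

end PartialOrder

section Embedding

theorem cbdry_lmapDomain [Preorder P] [Preorder Q] (φ : Q ↪o P) (u : CGrp K Q (n + 1)) :
    cbdry K P n (lmapDomain K K (OChain.map φ) u) =
      lmapDomain K K (OChain.map φ) (cbdry K Q n u) := by
  suffices h : cbdry K P n ∘ₗ lmapDomain K K (OChain.map φ) =
      lmapDomain K K (OChain.map φ) ∘ₗ cbdry K Q n from LinearMap.congr_fun h u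
  ext c : 2
  simp only [LinearMap.comp_apply, lsingle_apply, cbdry_single, map_sum, map_smul,
    lmapDomain_apply, mapDomain_single]
  rfl

theorem range_lmapDomain_oChainMap [Preorder P] [Preorder Q] (φ : Q ↪o P) (n : ℕ) :
    LinearMap.range (lmapDomain K K (OChain.map φ (n := n))) =
      supported K K {c | ∀ k, c.1 k ∈ Set.range φ} := by
  rw [← OChain.range_map, ← Set.image_univ, ← lmapDomain_supported, supported_univ,
    Submodule.map_top]

variable [Preorder P] [PartialOrder Q]

theorem lmapDomain_mem_cyclesAt_iff (φ : Q ↪o P) {u : CGrp K Q n} :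
    lmapDomain K K (OChain.map φ) u ∈ cyclesAt K P n ↔ u ∈ cyclesAt K Q n := by
  cases n with
  | zero => exact iff_of_true trivial trivial
  | succ n =>
    rw [cyclesAt, LinearMap.mem_ker, cbdry_lmapDomain, cyclesAt, LinearMap.mem_ker]
    exact map_eq_zero_iff _ (mapDomain_injective (OChain.map_injective φ n))

theorem rHomNontrivial_iff_of_orderEmbedding (φ : Q ↪o P) :
    RHomNontrivial K Q n ↔
      ∃ z ∈ supported K K {c : OChain P n | ∀ k, c.1 k ∈ Set.range φ}, z ∈ cyclesAt K P n ∧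
        ∀ v ∈ supported K K {c : OChain P (n + 1) | ∀ k, c.1 k ∈ Set.range φ},
          cbdry K P n v ≠ z := by
  simp only [← range_lmapDomain_oChainMap, LinearMap.mem_range, exists_exists_eq_and,
    forall_exists_index, forall_apply_eq_imp_iff, lmapDomain_mem_cyclesAt_iff, cbdry_lmapDomain]
  rw [RHomNontrivial, SetLike.not_le_iff_exists]
  simp only [boundariesIn, LinearMap.mem_range, not_exists, lmapDomain_apply, ne_eq,
    (mapDomain_injective (OChain.map_injective φ n)).eq_iff]

end Embedding

theorem rHomNontrivial_congr [PartialOrder P] [PartialOrder Q] (e : Q ≃o P) :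
    RHomNontrivial K Q n ↔ RHomNontrivial K P n := by
  rw [rHomNontrivial_iff_of_orderEmbedding e.toOrderEmbedding,
    rHomNontrivial_iff_of_orderEmbedding (OrderIso.refl P).toOrderEmbedding]
  simp only [OrderIso.coe_toOrderEmbedding, EquivLike.range_eq_univ]

end OrderChains

namespace LabelledComplex

section BarComplex

variable {K} {L : Type} [PartialOrder L] [OrderBot L]

variable (K L) in
/-- The bar complex: the order chains of nonbottom elements of `L`, each labelled by its largest
element. It is a resolution, though not a minimal one. -/
def bar : LabelledComplex K L where
  ι := OChain {y : L // y ≠ ⊥}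
  lab {i} := match i with
    | 0 => fun _ => ⊥
    | _ + 1 => fun c => c.1 0
  d := cbdry K {y : L // y ≠ ⊥}
  d_d _ := cbdry_cbdry
  lab_d i c := match i with
    | 0 => (mem_supported _ _).mpr fun _ _ => bot_le
    | _ + 1 => cbdry_single_mem_supported c

theorem bar_isResolution : (bar K L).IsResolution where
  unique_zero := ⟨{ default := ⟨Fin.elim0, fun k => k.elim0⟩
                    uniq := fun _ => Subtype.ext (Subsingleton.elim _ _) }⟩
  lab_zero _ := rfl
  lab_succ _ c := (c.1 0).2
  exact x hx i u hu hc := by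
    let x' : {y : L // y ≠ ⊥} := ⟨x, hx⟩
    have hchains (n) : (bar K L).chainsIn (n + 1) (Set.Iic x) =
        supported K K {c : OChain {y : L // y ≠ ⊥} (n + 1) | c.1 0 ≤ x'} := rfl
    refine ⟨coneMap K i x' u, by rw [hchains]; exact coneMap_mem_supported x' u, ?_⟩
    cases i with
    | zero => exact cbdry_coneMap_zero x' u
    | succ i =>
      rw [hchains] at hu
      have hcone := cbdry_coneMap_add_coneMap_cbdry hu
      rwa [show cbdry K {y : L // y ≠ ⊥} i u = 0 from hc, map_zero, add_zero] at hcone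

theorem bar_lab_lt_iff {x : L} (hx : x ≠ ⊥) {i : ℕ} {c : OChain {y : L // y ≠ ⊥} i} :
    (bar K L).lab (i := i) c < x ↔ ∀ k, (c.1 k : L) < x := by
  cases i with
  | zero => exact iff_of_true (bot_lt_iff_ne_bot.mpr hx) fun k => k.elim0
  | succ i => exact ⟨fun h k => lt_of_le_of_lt (c.2.antitone (Fin.zero_le k)) h, fun h => h 0⟩

theorem homologyBelow_bar_iff {x : L} (hx : x ≠ ⊥) {i : ℕ} :
    (bar K L).HomologyBelow i x ↔ RHomNontrivial K (Set.Ioo ⊥ x) i := by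
  let φ : Set.Ioo ⊥ x ↪o {y : L // y ≠ ⊥} :=
    OrderEmbedding.ofMapLEIff (fun y => ⟨y, y.2.1.ne'⟩) fun _ _ => Iff.rfl
  have hφ (y : {y : L // y ≠ ⊥}) : y ∈ Set.range φ ↔ y.1 < x :=
    ⟨by rintro ⟨y, rfl⟩; exact y.2.2, fun h => ⟨⟨y, bot_lt_iff_ne_bot.mpr y.2, h⟩, rfl⟩⟩
  have hchains (n) : (bar K L).chainsIn n (Set.Iio x) =
      supported K K {c : OChain {y : L // y ≠ ⊥} n | ∀ k, c.1 k ∈ Set.range φ} :=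
    congrArg (supported K K) (Set.ext fun c => (bar_lab_lt_iff hx).trans
      (forall_congr' fun k => (hφ _).symm))
  have hcycles (n) : (bar K L).cycles n = cyclesAt K {y : L // y ≠ ⊥} n := by cases n <;> rfl
  rw [rHomNontrivial_iff_of_orderEmbedding φ, HomologyBelow, hchains, hchains, hcycles]
  rfl

end BarComplex

end LabelledComplex

section Lattice

variable {K} {L : Type} [SemilatticeSup L] {a b j : ℕ}

theorem exists_sup_eq_top_of_rHomNontrivial [BoundedOrder L] [Nontrivial L] [WellFoundedLT L]
    (haj : a ≤ j) (hbj : b ≤ j) (hjab : j ≤ a + b + 1)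
    (h : RHomNontrivial K (Set.Ioo (⊥ : L) ⊤) j) :
    ∃ y z : L, y ≠ ⊥ ∧ z ≠ ⊥ ∧ y ⊔ z = ⊤ ∧
      RHomNontrivial K (Set.Ioo ⊥ y) a ∧ RHomNontrivial K (Set.Ioo ⊥ z) b := by
  let F := LabelledComplex.minimalResolution K L
  have hm : F.IsMinimal := LabelledComplex.minimalResolution_isMinimal
  have hF : F.IsResolution := LabelledComplex.minimalResolution_isResolution
  have hbar := LabelledComplex.bar_isResolution (K := K) (L := L)
  have exists_lab_eq_iff {x : L} (hx : x ≠ ⊥) {i : ℕ} :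
      (∃ e : F.ι (i + 1), F.lab e = x) ↔ RHomNontrivial K (Set.Ioo ⊥ x) i := by
    rw [hm.exists_lab_eq_iff hF hx, ← LabelledComplex.homologyBelow_bar_iff hx]
    exact ⟨.of_isResolution hF hbar, .of_isResolution hbar hF⟩
  obtain ⟨e₀, he₀⟩ := (exists_lab_eq_iff top_ne_bot).mpr h
  obtain ⟨e, g, heg⟩ := hm.exists_sup_eq_top hF hF b.succ_pos (Nat.succ_le_succ haj)
    (Nat.succ_le_succ hbj) (by omega) he₀
  have he := hF.lab_succ a e
  have hg := hF.lab_succ b g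
  exact ⟨F.lab e, F.lab g, he, hg, heg, (exists_lab_eq_iff he).mp ⟨e, rfl⟩,
    (exists_lab_eq_iff hg).mp ⟨g, rfl⟩⟩

theorem exists_sup_eq_of_rHomNontrivial [OrderBot L] [WellFoundedLT L] {x : L} (hx : x ≠ ⊥)
    (haj : a ≤ j) (hbj : b ≤ j) (hjab : j ≤ a + b + 1) (h : RHomNontrivial K (Set.Ioo ⊥ x) j) :
    ∃ y z : L, y ≠ ⊥ ∧ z ≠ ⊥ ∧ y ⊔ z = x ∧
      RHomNontrivial K (Set.Ioo ⊥ y) a ∧ RHomNontrivial K (Set.Ioo ⊥ z) b := by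
  have rHom_Ioo_iff (y : Set.Iic x) (i : ℕ) :
      RHomNontrivial K (Set.Ioo ⊥ y) i ↔ RHomNontrivial K (Set.Ioo ⊥ (y : L)) i :=
    rHomNontrivial_congr
      { toEquiv := Equiv.subtypeSubtypeEquivSubtype (q := (· ∈ Set.Ioo ⊥ (y : L)))
          fun hz => hz.2.le.trans y.2
        map_rel_iff' := Iff.rfl }
  have ne_bot {y : Set.Iic x} (hy : y ≠ ⊥) : (y : L) ≠ ⊥ := fun h => hy (Subtype.ext h)
  have : Nontrivial (Set.Iic x) := ⟨⊤, ⊥, fun h => hx (congrArg Subtype.val h)⟩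
  obtain ⟨y, z, hy, hz, hyz, hy', hz'⟩ := exists_sup_eq_top_of_rHomNontrivial haj hbj hjab
    ((rHom_Ioo_iff ⊤ j).mpr h)
  exact ⟨y, z, ne_bot hy, ne_bot hz, congrArg Subtype.val hyz, (rHom_Ioo_iff y a).mp hy',
    (rHom_Ioo_iff z b).mp hz'⟩

end Lattice

/-! ### The lcm-lattice -/

section LcmLattice

variable {K} {nv : ℕ} {I : Ideal (PolyS K nv)}

theorem zero_mem_lcmSet : (0 : Fin nv → ℕ) ∈ lcmSet K nv I :=
  ⟨∅, by rw [Finset.coe_empty]; exact Set.empty_subset _, rfl⟩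

theorem sup_mem_lcmSet {x y : Fin nv → ℕ} (hx : x ∈ lcmSet K nv I) (hy : y ∈ lcmSet K nv I) :
    x ⊔ y ∈ lcmSet K nv I := by
  classical
  obtain ⟨B, hB, rfl⟩ := hx
  obtain ⟨C, hC, rfl⟩ := hy
  exact ⟨B ∪ C, by rw [Finset.coe_union]; exact Set.union_subset hB hC, Finset.sup_union.symm⟩

instance : SemilatticeSup (lcmSet K nv I) :=
  Subtype.semilatticeSup fun _ _ => sup_mem_lcmSet

instance : OrderBot (lcmSet K nv I) where
  bot := ⟨0, zero_mem_lcmSet⟩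
  bot_le _ _ := Nat.zero_le _

instance {P : Type} [Preorder P] [Finite P] (n : ℕ) : Finite (OChain P n) :=
  Subtype.finite

theorem finrank_sub_finrank_ne_zero_iff {P : Type} [PartialOrder P] [Finite P] {n : ℕ} :
    Module.finrank K (cyclesAt K P n) - Module.finrank K (boundariesIn K P n) ≠ 0 ↔
      RHomNontrivial K P n := by
  rw [Nat.sub_ne_zero_iff_lt, RHomNontrivial, ← not_le, not_iff_not]
  exact ⟨fun h => (Submodule.eq_of_le_of_finrank_le (boundariesIn_le_cyclesAt n) h).ge,
    Submodule.finrank_mono⟩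

theorem multiBetti_succ_ne_zero_iff {i : ℕ} {m : Fin nv → ℕ} :
    multiBetti K nv I (i + 1) m ≠ 0 ↔
      ∃ x : lcmSet K nv I, x ≠ ⊥ ∧ RHomNontrivial K (Set.Ioo ⊥ x) i ∧ x = m := by
  have : Finite (openInt K nv I m) :=
    ((Set.finite_Iic m).subset fun _ hp => hp.2.2.le).to_subtype
  rw [multiBetti, if_neg i.succ_ne_zero, add_tsub_cancel_right]
  split_ifs with h
  · have hcongr : RHomNontrivial K (Set.Ioo (⊥ : lcmSet K nv I) ⟨m, h.1⟩) i ↔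
        RHomNontrivial K (openInt K nv I m) i :=
      rHomNontrivial_congr
        { toEquiv := Equiv.subtypeSubtypeEquivSubtypeInter (· ∈ lcmSet K nv I)
            (fun p => 0 < p ∧ p < m)
          map_rel_iff' := Iff.rfl }
    rw [finrank_sub_finrank_ne_zero_iff, ← hcongr]
    refine ⟨fun hm => ⟨⟨m, h.1⟩, fun h0 => h.2 (congrArg Subtype.val h0), hm, rfl⟩, ?_⟩
    rintro ⟨x, -, hx, rfl⟩
    exact hx
  · refine iff_of_false (fun h0 => h0 rfl) ?_
    rintro ⟨x, hx, -, rfl⟩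
    exact h ⟨x.2, fun h0 => hx (Subtype.ext h0)⟩

theorem bddAbove_lcmSet : BddAbove (lcmSet K nv I) := by
  have hanti : IsAntichain (· ≤ ·) (minGens K nv I) := fun x hx y hy hne hle =>
    hy.2 x (lt_of_le_of_ne hle hne) hx.1
  have hfin : (minGens K nv I).Finite :=
    hanti.finite_of_partiallyWellOrderedOn (Set.isPWO_of_wellQuasiOrderedLE _)
  refine ⟨hfin.toFinset.sup id, ?_⟩
  rintro _ ⟨B, hB, rfl⟩
  exact Finset.sup_mono fun b hb => hfin.mem_toFinset.mpr (hB hb)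

theorem degTot_mono : Monotone (degTot nv) :=
  fun _ _ h => Finset.sum_le_sum fun r _ => h r

theorem finite_setOf_degTot_eq (j : ℕ) : {x : Fin nv → ℕ | degTot nv x = j}.Finite :=
  (Set.finite_Iic fun _ => j).subset fun _ hx r =>
    (Finset.single_le_sum (fun _ _ => Nat.zero_le _) (Finset.mem_univ r)).trans_eq hx

theorem bddAbove_setOf_betti_ne_zero (i : ℕ) : BddAbove {j | betti K nv I (i + 1) j ≠ 0} := by
  obtain ⟨M, hM⟩ := bddAbove_lcmSet (K := K) (I := I)
  refine ⟨degTot nv M, fun j hj => ?_⟩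
  obtain ⟨_, rfl, hβ⟩ := exists_ne_zero_of_finsum_mem_ne_zero hj
  obtain ⟨x, -, -, rfl⟩ := multiBetti_succ_ne_zero_iff.mp hβ
  exact degTot_mono (hM x.2)

theorem betti_degTot_ne_zero {i : ℕ} {x : Fin nv → ℕ} (h : multiBetti K nv I i x ≠ 0) :
    betti K nv I i (degTot nv x) ≠ 0 := by
  have hfin := finite_setOf_degTot_eq (nv := nv) (degTot nv x)
  rw [betti, finsum_mem_eq_finite_toFinset_sum _ hfin]
  exact fun h0 => h (Finset.sum_eq_zero_iff.mp h0 x (hfin.mem_toFinset.mpr rfl))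

theorem degTot_le_tshift {i : ℕ} {x : Fin nv → ℕ} (h : multiBetti K nv I (i + 1) x ≠ 0) :
    degTot nv x ≤ tshift K nv I (i + 1) :=
  le_csSup (bddAbove_setOf_betti_ne_zero i) (betti_degTot_ne_zero h)

end LcmLattice

/-- Let `I` be a monomial ideal in `S = K[x₁, …, xₙ]`, let
`i₁, i₂ ≥ 1` and `0 ≤ k ≤ min{i₁, i₂}`.  For any monomial `m` with
`β_{i₁+i₂-k, m}(S/I) ≠ 0` there are monomials `n₁, n₂` dividing `m` such that
`m = lcm(n₁, n₂)` (the pointwise supremum of exponent vectors),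
`β_{i₁,n₁}(S/I) ≠ 0`, `β_{i₂,n₂}(S/I) ≠ 0`; in particular `deg n₁ ≤ t_{i₁}(S/I)` and
`deg n₂ ≤ t_{i₂}(S/I)`. -/
theorem multigraded_betti_lcm_decomposition (nv : ℕ) (I : Ideal (PolyS K nv))
    (hI : IsMonomialIdeal K nv I) (i₁ i₂ k : ℕ) (hi₁ : 1 ≤ i₁) (hi₂ : 1 ≤ i₂)
    (hk : k ≤ min i₁ i₂) (m : Fin nv → ℕ)
    (hm : multiBetti K nv I (i₁ + i₂ - k) m ≠ 0) :
    ∃ n₁ n₂ : Fin nv → ℕ,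
      n₁ ≤ m ∧ n₂ ≤ m ∧ m = n₁ ⊔ n₂ ∧
      multiBetti K nv I i₁ n₁ ≠ 0 ∧ multiBetti K nv I i₂ n₂ ≠ 0 ∧
      degTot nv n₁ ≤ tshift K nv I i₁ ∧ degTot nv n₂ ≤ tshift K nv I i₂ := by
  obtain ⟨a, rfl⟩ := Nat.exists_eq_add_of_le' hi₁
  obtain ⟨b, rfl⟩ := Nat.exists_eq_add_of_le' hi₂
  obtain ⟨hka, hkb⟩ := le_min_iff.mp hk
  obtain ⟨j, hj⟩ : ∃ j, a + 1 + (b + 1) - k = j + 1 := Nat.exists_eq_add_of_le' (by omega)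
  rw [hj] at hm
  obtain ⟨x, hx, hxj, rfl⟩ := multiBetti_succ_ne_zero_iff.mp hm
  obtain ⟨y, z, hy, hz, hyz, hya, hzb⟩ := exists_sup_eq_of_rHomNontrivial (a := a) (b := b) hx
    (by omega) (by omega) (by omega) hxj
  have hβy : multiBetti K nv I (a + 1) y ≠ 0 := multiBetti_succ_ne_zero_iff.mpr ⟨y, hy, hya, rfl⟩
  have hβz : multiBetti K nv I (b + 1) z ≠ 0 := multiBetti_succ_ne_zero_iff.mpr ⟨z, hz, hzb, rfl⟩
  exact ⟨y, z, hyz ▸ le_sup_left, hyz ▸ le_sup_right, (congrArg Subtype.val hyz).symm, hβy, hβz,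
    degTot_le_tshift hβy, degTot_le_tshift hβz⟩

end
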